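/- Let J be a Jordan algebra over a field K of characteristic zero. Then J is semisimple (i.e., J contains no nonzero nilpotent ideal) if and only if there exist a finite-dimensional vector space V and a representation π : J → End(V) of J such that the bilinear form B(x, y) = tr(π(xy)) on J is nondegenerate. -/

import Mathlib

/-!
For a representation `π` of a Jordan algebra, `π (x ^ n)` is the mean of the `n`-th powers of the
two roots of `t ^ 2 = 2 π(x) t + π(x ^ 2) - 2 π(x) ^ 2`, whose mean is `π x`. If the traces of
these half power sums vanish for all large `n`, then the roots, and hence `π x`, are nilpotent,
because in characteristic zero an operator all of whose high powers have trace zero is nilpotent.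
In particular `π` maps nilpotent elements to operators of trace zero, so a nilpotent ideal lies in
the radical of every trace form.

Conversely, let `N` be the radical of the trace form `tr (L (x * y))` of the regular
representation `L`. The identity `[L x, [L w, L y]] = L ((x * w) * y - (x * y) * w)` shows that
`N` is an ideal and that `p = L(N)` is a Lie triple system; as above, `p` consists of nilpotent
operators, so `tr (a * b) = 0` for all `a`, `b` in `p`. The Lie algebra `[p, p] ⊕ p`, acting on
two copies of the algebra by `d + a` and by `d - a`, then has zero trace form, and it is spanned
modulo its derived algebra by the nilpotent operators in `p`. The criteria of Cartan and Engel
show that products of sufficiently many elements of `p` vanish. Hence `N` is a nilpotent ideal,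
which is zero if the algebra is semisimple.
-/

variable (K : Type*) [Field K] [CharZero K]
variable (J : Type*) [NonUnitalNonAssocCommRing J] [Module K J]
  [SMulCommClass K J J] [IsScalarTower K J J] [FiniteDimensional K J]

/-- The series `I⁽ᵏ⁾` of a subspace `I` (shifted by one): `iser K J I n = I⁽ⁿ⁺¹⁾`, where
`I⁽¹⁾ = I` and `I⁽ᵏ⁾ = span {I⁽ⁱ⁾ · I⁽ʲ⁾ : i + j = k}`. -/
def iser (I : Submodule K J) : ℕ → Submodule K J
  | 0 => I
  | n + 1 =>
      ⨆ p : Fin (n + 1),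
        Submodule.span K
          {z : J | ∃ x ∈ iser I p.1, ∃ y ∈ iser I (n - p.1), z = x * y}
  termination_by n => n
  decreasing_by
  · exact p.isLt
  · omega

section TraceCriterion

open Polynomial

variable {k V : Type*} [Field k] [CharZero k] [AddCommGroup V] [Module k V]
  [FiniteDimensional k V]

/- An idempotent of trace zero vanishes in characteristic zero; it is applied to the projection
onto the part of `V` where `f` is invertible. -/
theorem isNilpotent_of_trace_pow_eq_zero {f : Module.End k V} {m : ℕ}
    (hf : ∀ n ≥ m, LinearMap.trace k V (f ^ n) = 0) : IsNilpotent f := by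
  have hne : minpoly k f ≠ 0 := minpoly.ne_zero (Algebra.IsIntegral.isIntegral f)
  obtain ⟨q, hq, hXq⟩ := exists_eq_pow_rootMultiplicity_mul_and_not_dvd _ hne 0
  set r := rootMultiplicity 0 (minpoly k f)
  rw [map_zero, sub_zero] at hq hXq
  have hrq : aeval f (X ^ r * q) = 0 := by rw [← hq, minpoly.aeval]
  obtain ⟨u, v, huv⟩ := (irreducible_X.coprime_iff_not_dvd.mpr hXq).pow_left (m := m + r)
  have hidem : IsIdempotentElem (aeval f (u * X ^ (m + r))) := by
    have h : u * X ^ (m + r) * (u * X ^ (m + r)) =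
        u * X ^ (m + r) - u * v * X ^ m * (X ^ r * q) := by
      linear_combination (u * X ^ (m + r)) * huv
    rw [IsIdempotentElem, ← map_mul, h, map_sub, map_mul _ (u * v * X ^ m), hrq, mul_zero, sub_zero]
  have htr (p : k[X]) : LinearMap.trace k V (aeval f (p * X ^ (m + r))) = 0 := by
    induction p using Polynomial.induction_on' with
    | add p q hp hq => rw [add_mul, map_add, map_add, hp, hq, add_zero]
    | monomial n c =>
      rw [← C_mul_X_pow_eq_monomial, mul_assoc, ← pow_add, ← smul_eq_C_mul, map_smul, map_smul,
        map_pow, aeval_X, hf _ (by omega), smul_zero]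
  have hzero : aeval f (u * X ^ (m + r)) = 0 :=
    LinearMap.IsIdempotentElem.eq_zero_of_trace_eq_zero hidem (htr u)
  have hXr : X ^ r = X ^ r * (u * X ^ (m + r)) + v * (X ^ r * q) := by
    linear_combination -X ^ r * huv
  refine ⟨r, ?_⟩
  rw [← aeval_X_pow (R := k) f, hXr, map_add, map_mul, hzero, map_mul, hrq, mul_zero, mul_zero,
    add_zero]

end TraceCriterion

section HalfPowerSum

theorem trace_eq_trace_fst_add_trace_snd {R M N : Type*} [CommRing R] [AddCommGroup M] [Module R M]
    [Module.Free R M] [Module.Finite R M] [AddCommGroup N] [Module R N] [Module.Free R N]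
    [Module.Finite R N] (f : Module.End R (M × N)) :
    LinearMap.trace R (M × N) f =
      LinearMap.trace R M (LinearMap.fst R M N ∘ₗ f ∘ₗ LinearMap.inl R M N) +
        LinearMap.trace R N (LinearMap.snd R M N ∘ₗ f ∘ₗ LinearMap.inr R M N) := by
  have hf : f = (f ∘ₗ LinearMap.inl R M N) ∘ₗ LinearMap.fst R M N +
      (f ∘ₗ LinearMap.inr R M N) ∘ₗ LinearMap.snd R M N := by
    refine LinearMap.ext fun v ↦ ?_
    simp [← map_add]
  conv_lhs => rw [hf]
  rw [map_add, LinearMap.trace_comp_comm' (LinearMap.fst R M N),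
    LinearMap.trace_comp_comm' (LinearMap.snd R M N)]

/-- Half the `n`-th power sum `(λ ^ n + μ ^ n) / 2` of the roots `λ`, `μ` of
`t ^ 2 = 2 * a * t + c`, so that the first of them is the mean `a` of the roots. -/
def halfPowerSum {R : Type*} [Semiring R] (a c : R) : ℕ → R
  | 0 => 1
  | 1 => a
  | n + 2 => 2 • (a * halfPowerSum a c (n + 1)) + c * halfPowerSum a c n

variable {R M : Type*} [CommRing R] [AddCommGroup M] [Module R M]

/-- The companion operator `(v, w) ↦ (2 a v + c w, v)` on `M × M` of the quadratic equation
`t ^ 2 = 2 * a * t + c`. It provides a root of this equation when `a` and `c` are made to act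
diagonally on `M × M`. -/
def companionEnd (a c : Module.End R M) : Module.End R (M × M) :=
  ((2 • a).coprod c).prod (LinearMap.fst R M M)

theorem companionEnd_mul_self (a c : Module.End R M) : companionEnd a c * companionEnd a c =
    2 • (a.prodMap a * companionEnd a c) + c.prodMap c := by
  ext <;> simp [companionEnd, smul_smul]

theorem commute_prodMap_companionEnd {a c d : Module.End R M} (ha : Commute d a)
    (hc : Commute d c) : Commute (d.prodMap d) (companionEnd a c) := by
  have ha' := LinearMap.congr_fun ha.eq
  have hc' := LinearMap.congr_fun hc.eq
  refine LinearMap.ext fun v ↦ ?_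
  simp_all [companionEnd]

theorem prodMap_mul_companionEnd_pow_add_two (a c d : Module.End R M) (n : ℕ) :
    d.prodMap d * companionEnd a c ^ (n + 2) =
      2 • ((d * a).prodMap (d * a) * companionEnd a c ^ (n + 1)) +
        (d * c).prodMap (d * c) * companionEnd a c ^ n := by
  have hpow : companionEnd a c ^ (n + 2) =
      companionEnd a c * companionEnd a c * companionEnd a c ^ n := by
    rw [pow_succ', pow_succ', mul_assoc]
  rw [hpow, companionEnd_mul_self, add_mul, mul_add, smul_mul_assoc, mul_smul_comm, mul_assoc,
    ← pow_succ', ← mul_assoc, ← mul_assoc, LinearMap.prodMap_mul, LinearMap.prodMap_mul]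

variable [Module.Free R M] [Module.Finite R M]

theorem trace_prodMap_mul_companionEnd_pow (a c d : Module.End R M) (n : ℕ) :
    LinearMap.trace R (M × M) (d.prodMap d * companionEnd a c ^ n) =
      2 * LinearMap.trace R M (d * halfPowerSum a c n) := by
  induction n using Nat.twoStepInduction generalizing d with
  | zero => simp [halfPowerSum, LinearMap.trace_prodMap', two_mul]
  | one =>
    have hfst : LinearMap.fst R M M ∘ₗ (d.prodMap d * companionEnd a c) ∘ₗ LinearMap.inl R M M =
        2 • (d * a) := by ext; simp [companionEnd]
    have hsnd : LinearMap.snd R M M ∘ₗ (d.prodMap d * companionEnd a c) ∘ₗ LinearMap.inr R M M =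
        0 := by ext; simp [companionEnd]
    rw [pow_one, trace_eq_trace_fst_add_trace_snd, hfst, hsnd, map_zero, add_zero, two_smul,
      map_add, two_mul, halfPowerSum]
  | more n ih₀ ih₁ =>
    rw [prodMap_mul_companionEnd_pow_add_two, map_add, map_nsmul, ih₁, ih₀, halfPowerSum, mul_add,
      mul_smul_comm, map_add, map_nsmul, mul_assoc, mul_assoc, mul_add, mul_smul_comm]

theorem isNilpotent_of_trace_halfPowerSum_eq_zero {k V : Type*} [Field k] [CharZero k]
    [AddCommGroup V] [Module k V] [FiniteDimensional k V] {a c : Module.End k V}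
    (hac : Commute a c) {m : ℕ} (htr : ∀ n ≥ m, LinearMap.trace k V (halfPowerSum a c n) = 0) :
    IsNilpotent a := by
  have hC : IsNilpotent (companionEnd a c) := by
    refine isNilpotent_of_trace_pow_eq_zero (m := m) fun n hn ↦ ?_
    have h := trace_prodMap_mul_companionEnd_pow a c 1 n
    rwa [one_mul, htr n hn, mul_zero, LinearMap.prodMap_one, one_mul] at h
  refine isNilpotent_of_trace_pow_eq_zero (m := 1) fun n hn ↦ ?_
  obtain ⟨n, rfl⟩ := Nat.exists_eq_add_of_le' hn
  have hcomm : Commute ((a ^ n).prodMap (a ^ n)) (companionEnd a c) :=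
    commute_prodMap_companionEnd (Commute.pow_self a n) (hac.pow_left n)
  have h := trace_prodMap_mul_companionEnd_pow a c (a ^ n) 1
  rw [pow_one, (LinearMap.isNilpotent_trace_of_isNilpotent
    (hcomm.isNilpotent_mul_left hC)).eq_zero] at h
  simpa [halfPowerSum, pow_succ] using h.symm

end HalfPowerSum

section JordanRepresentation

/-- The power `x ^ (n + 1)`, bracketed to the right. -/
def powSucc {A : Type*} [Mul A] (x : A) : ℕ → A
  | 0 => x
  | n + 1 => x * powSucc x n

theorem powSucc_eq_zero_of_le {A : Type*} [MulZeroClass A] {x : A} {m n : ℕ}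
    (hx : powSucc x m = 0) (hmn : m ≤ n) : powSucc x n = 0 := by
  induction n, hmn using Nat.le_induction with
  | base => exact hx
  | succ n _ ih => rw [powSucc, ih, mul_zero]

theorem sq_mul_powSucc {A : Type*} [CommMagma A] [IsCommJordan A] (x : A) (n : ℕ) :
    x * x * powSucc x n = powSucc x (n + 2) := by
  induction n with
  | zero => exact mul_comm _ _
  | succ n ih =>
    rw [mul_comm, powSucc, IsCommJordan.lmul_comm_rmul_rmul, mul_comm (powSucc x n), ih,
      powSucc.eq_def x (n + 1 + 2)]

/-- The identities of a representation of a Jordan algebra, for a linear map with values in any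
associative algebra in place of `End V`. -/
structure IsJordanRep {R A S : Type*} [CommRing R] [NonUnitalNonAssocCommRing A] [Module R A]
    [Ring S] [Module R S] (π : A →ₗ[R] S) : Prop where
  commute_sq (x : A) : π (x * x) * π x = π x * π (x * x)
  quadratic (x y : A) :
    2 • (π (x * y) * π x) + π (x * x) * π y - 2 • (π x * (π y * π x)) - π (x * x * y) = 0

namespace IsJordanRep

variable {R A S T : Type*} [CommRing R] [NonUnitalNonAssocCommRing A] [Module R A] [Ring S]
  [Algebra R S] [Ring T] [Algebra R T] {π : A →ₗ[R] S}

theorem comp (hπ : IsJordanRep π) (φ : S →ₐ[R] T) : IsJordanRep (φ.toLinearMap ∘ₗ π) where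
  commute_sq x := by simp [← map_mul, hπ.commute_sq x]
  quadratic x y := by
    have h := congrArg φ (hπ.quadratic x y)
    simpa only [LinearMap.comp_apply, AlgHom.toLinearMap_apply, map_sub, map_add, map_nsmul,
      map_mul, map_zero] using h

variable [IsCommJordan A]

theorem map_powSucc_add_two (hπ : IsJordanRep π) (x : A) (n : ℕ) :
    π (powSucc x (n + 2)) = 2 • (π (powSucc x (n + 1)) * π x) + π (x * x) * π (powSucc x n) -
      2 • (π x * (π (powSucc x n) * π x)) := by
  have h := hπ.quadratic x (powSucc x n)
  rw [sq_mul_powSucc, sub_eq_zero] at h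
  exact h.symm

theorem commute_map_powSucc (hπ : IsJordanRep π) (x : A) (n : ℕ) :
    Commute (π x) (π (powSucc x n)) := by
  induction n using Nat.twoStepInduction with
  | zero => exact Commute.refl _
  | one => exact (hπ.commute_sq x).symm
  | more n ih₀ ih₁ =>
    have hx := Commute.refl (π x)
    have hxx : Commute (π x) (π (x * x)) := (hπ.commute_sq x).symm
    rw [hπ.map_powSucc_add_two]
    exact (((ih₁.mul_right hx).smul_right 2).add_right (hxx.mul_right ih₀)).sub_right
      ((hx.mul_right (ih₀.mul_right hx)).smul_right 2)

theorem map_powSucc (hπ : IsJordanRep π) (x : A) (n : ℕ) :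
    π (powSucc x n) = halfPowerSum (π x) (π (x * x) - 2 • (π x * π x)) (n + 1) := by
  induction n using Nat.twoStepInduction with
  | zero => rfl
  | one => simp [halfPowerSum, powSucc]
  | more n ih₀ ih₁ =>
    rw [halfPowerSum, ← ih₀, ← ih₁, hπ.map_powSucc_add_two, ← (hπ.commute_map_powSucc x n).eq,
      ← (hπ.commute_map_powSucc x (n + 1)).eq]
    noncomm_ring

theorem isNilpotent_map {k V : Type*} [Field k] [CharZero k] [Module k A] [AddCommGroup V]
    [Module k V] [FiniteDimensional k V] {π : A →ₗ[k] Module.End k V} (hπ : IsJordanRep π) {x : A}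
    {m : ℕ} (hx : ∀ n ≥ m, LinearMap.trace k V (π (powSucc x n)) = 0) : IsNilpotent (π x) := by
  have hc : Commute (π x) (π (x * x) - 2 • (π x * π x)) :=
    (show Commute (π x) (π (x * x)) from (hπ.commute_sq x).symm).sub_right
      (((Commute.refl _).mul_right (Commute.refl _)).smul_right 2)
  refine isNilpotent_of_trace_halfPowerSum_eq_zero hc (m := m + 1) fun n hn ↦ ?_
  obtain ⟨n, rfl⟩ := Nat.exists_eq_add_of_le' (Nat.one_le_of_lt hn)
  rw [← hπ.map_powSucc]
  exact hx n (by omega)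

end IsJordanRep

end JordanRepresentation

section MultiplicationOperators

attribute [local instance] LieRing.ofAssociativeRing

variable {R A : Type*} [CommRing R] [NonUnitalNonAssocCommRing A] [IsCommJordan A]
  [IsAddTorsionFree A]

theorem mul_mul_mul_add_add_eq (a b c d : A) :
    a * b * (c * d) + a * c * (b * d) + b * c * (a * d) =
      a * (c * (b * d)) + b * (c * (a * d)) + a * b * c * d := by
  have htwo : 2 • (a * (b * d * c) - b * d * (a * c) + (b * (d * a * c) - d * a * (b * c)) +
      (d * (a * b * c) - a * b * (d * c))) = 0 :=
    DFunLike.congr_fun (two_nsmul_lie_lmul_lmul_add_add_eq_zero a b d) c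
  have h := (smul_eq_zero_iff_right two_ne_zero).mp htwo
  rw [mul_comm d a, mul_comm d c, mul_comm d (a * b * c), mul_comm (b * d) c, mul_comm (a * d) c,
    mul_comm (b * d), mul_comm (a * d)] at h
  linear_combination (norm := abel) -h

variable [Module R A] [SMulCommClass R A A] [IsScalarTower R A A]

local notation "L" => LinearMap.mul R A

theorem lmul_mul_lmul_add_add_eq (a b c : A) :
    L (a * b) * L c + L (a * c) * L b + L (b * c) * L a =
      L a * L c * L b + L b * L c * L a + L (a * b * c) :=
  LinearMap.ext fun d ↦ mul_mul_mul_add_add_eq a b c d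

theorem isJordanRep_mul : IsJordanRep L where
  commute_sq x := LinearMap.ext fun y ↦ IsJordan.lmul_lmul_comm_lmul x y
  quadratic x y := by
    have h := lmul_mul_lmul_add_add_eq (R := R) x x y
    linear_combination (norm := noncomm_ring) h

theorem lie_lie_mul (x w y : A) : ⁅L x, ⁅L w, L y⁆⁆ = L (x * w * y - x * y * w) := by
  have h1 := lmul_mul_lmul_add_add_eq (R := R) x w y
  have h2 := lmul_mul_lmul_add_add_eq (R := R) x y w
  rw [mul_comm y w] at h2
  rw [Ring.lie_def, Ring.lie_def, map_sub]
  linear_combination (norm := noncomm_ring) h1 - h2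

theorem trace_lmul_mul_mul_comm (x w y : A) :
    LinearMap.trace R A (L (x * w * y)) = LinearMap.trace R A (L (x * y * w)) := by
  rw [← sub_eq_zero, ← map_sub, ← map_sub, ← lie_lie_mul, LinearMap.trace_lie]

end MultiplicationOperators

section NilpotentModuloIdeal

theorem isNilpotent_of_mapsTo_sub {R M : Type*} [CommRing R] [AddCommGroup M] [Module R M]
    {F : ℕ → Submodule R M} {n : ℕ} (hF₀ : F 0 = ⊤) (hFn : F n = ⊥) {f g : Module.End R M}
    (hf : ∀ i, Set.MapsTo f (F i) (F i)) (hg : ∀ i, Set.MapsTo g (F i) (F i))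
    (hfg : ∀ i, Set.MapsTo (f - g) (F i) (F (i + 1))) (hnil : IsNilpotent g) : IsNilpotent f := by
  have hpow (i j : ℕ) : Set.MapsTo (f ^ j - g ^ j) (F i) (F (i + 1)) := by
    induction j with
    | zero => intro v _; simp
    | succ j ih =>
      have h : f ^ (j + 1) - g ^ (j + 1) = f * (f ^ j - g ^ j) + (f - g) * g ^ j := by
        rw [pow_succ', pow_succ', mul_sub, sub_mul]; abel
      have hgj : Set.MapsTo (g ^ j) (F i) (F i) := by
        rw [Module.End.coe_pow]; exact (hg i).iterate j
      rw [h]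
      exact fun v hv ↦ add_mem (hf (i + 1) (ih hv)) (hfg i (hgj hv))
  obtain ⟨m, hm⟩ := hnil
  have hiter (i : ℕ) (v : M) : ((f ^ m) ^ i) v ∈ F i := by
    induction i with
    | zero => rw [hF₀]; exact Submodule.mem_top
    | succ i ih =>
      rw [pow_succ', Module.End.mul_apply]
      simpa [hm] using hpow i m ih
  refine ⟨m * n, LinearMap.ext fun v ↦ ?_⟩
  rw [pow_mul]
  exact (Submodule.mem_bot R).mp (hFn ▸ hiter n v)

theorem isNilpotent_toEnd_of_sub_mem {R L M : Type*} [CommRing R] [LieRing L] [LieAlgebra R L]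
    [AddCommGroup M] [Module R M] [LieRingModule L M] [LieModule R L M] (I : LieIdeal R L)
    [LieModule.IsNilpotent I M] {x y : L} (hxy : x - y ∈ I)
    (hy : IsNilpotent (LieModule.toEnd R L M y)) : IsNilpotent (LieModule.toEnd R L M x) := by
  obtain ⟨n, hn⟩ := (LieModule.isNilpotent_iff R I M).mp ‹_›
  refine isNilpotent_of_mapsTo_sub (F := fun i ↦ (I.lcs M i).toSubmodule) (n := n) rfl ?_
    (fun i v hv ↦ LieSubmodule.lie_mem _ hv) (fun i v hv ↦ LieSubmodule.lie_mem _ hv)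
    (fun i v hv ↦ ?_) hy
  · rw [LieIdeal.coe_lcs_eq, hn, LieSubmodule.bot_toSubmodule]
  · rw [← map_sub, LieIdeal.lcs_succ]
    exact LieSubmodule.lie_mem_lie hxy hv

/- By Cartan's criterion the derived algebra acts nilpotently, so Engel's theorem applies to the
whole algebra. -/
theorem lieModule_isNilpotent_of_traceForm_eq_zero {k L M : Type*} [Field k] [CharZero k]
    [LieRing L] [LieAlgebra k L] [AddCommGroup M] [Module k M] [FiniteDimensional k M]
    [LieRingModule L M] [LieModule k L M] (htr : LieModule.traceForm k L M = 0)
    (hnil : ∀ x : L, ∃ y : L, x - y ∈ LieAlgebra.derivedSeries k L 1 ∧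
      IsNilpotent (LieModule.toEnd k L M y)) :
    LieModule.IsNilpotent L M := by
  have := LieModule.isNilpotent_derivedSeries_of_traceForm_eq_zero htr
  refine (LieModule.isNilpotent_iff_forall' (R := k)).mpr fun x ↦ ?_
  obtain ⟨y, hxy, hy⟩ := hnil x
  exact isNilpotent_toEnd_of_sub_mem (LieAlgebra.derivedSeries k L 1) hxy hy

end NilpotentModuloIdeal

section LieTripleSystem

variable {R L : Type*} [CommRing R] [LieRing L] [LieAlgebra R L]

/-- A Lie triple system in a Lie algebra: a subspace closed under the triple product
`⁅a, ⁅b, c⁆⁆`. -/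
def IsLieTripleSystem (p : Submodule R L) : Prop :=
  ∀ a ∈ p, ∀ b ∈ p, ∀ c ∈ p, ⁅a, ⁅b, c⁆⁆ ∈ p

/-- The span of the brackets of elements of `p`: for a Lie triple system, its Lie algebra of inner
derivations. -/
def bracketSpan (p : Submodule R L) : Submodule R L :=
  Submodule.map₂ (LieModule.toEnd R L L : L →ₗ[R] Module.End R L) p p

variable {p : Submodule R L}

theorem lie_mem_bracketSpan {a b : L} (ha : a ∈ p) (hb : b ∈ p) : ⁅a, b⁆ ∈ bracketSpan p :=
  Submodule.apply_mem_map₂ (LieModule.toEnd R L L : L →ₗ[R] Module.End R L) ha hb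

namespace IsLieTripleSystem

theorem lie_mem_left (hp : IsLieTripleSystem p) {a d : L} (ha : a ∈ p) (hd : d ∈ bracketSpan p) :
    ⁅a, d⁆ ∈ p := by
  have h : bracketSpan p ≤ p.comap (LieModule.toEnd R L L a) := Submodule.map₂_le.mpr (hp a ha)
  exact h hd

theorem lie_mem_right (hp : IsLieTripleSystem p) {a d : L} (hd : d ∈ bracketSpan p) (ha : a ∈ p) :
    ⁅d, a⁆ ∈ p :=
  lie_skew d a ▸ neg_mem (hp.lie_mem_left ha hd)

theorem lie_mem_bracketSpan_of_mem (hp : IsLieTripleSystem p) {d e : L} (hd : d ∈ bracketSpan p)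
    (he : e ∈ bracketSpan p) : ⁅d, e⁆ ∈ bracketSpan p := by
  have h : bracketSpan p ≤ (bracketSpan p).comap (LieModule.toEnd R L L d) := by
    refine Submodule.map₂_le.mpr fun b hb c hc ↦ ?_
    change ⁅d, ⁅b, c⁆⁆ ∈ bracketSpan p
    rw [leibniz_lie]
    exact add_mem (lie_mem_bracketSpan (hp.lie_mem_right hd hb) hc)
      (lie_mem_bracketSpan hb (hp.lie_mem_right hd hc))
  exact h he

end IsLieTripleSystem

end LieTripleSystem

section TraceForm

attribute [local instance] LieRing.ofAssociativeRing

variable {k V : Type*} [Field k] [CharZero k] [AddCommGroup V] [Module k V]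
  {p : Submodule k (Module.End k V)}

theorem trace_mul_eq_zero_of_forall_isNilpotent (hnil : ∀ a ∈ p, IsNilpotent a)
    {a b : Module.End k V} (ha : a ∈ p) (hb : b ∈ p) : LinearMap.trace k V (a * b) = 0 := by
  have hsq (c : Module.End k V) (hc : c ∈ p) : LinearMap.trace k V (c * c) = 0 :=
    (LinearMap.isNilpotent_trace_of_isNilpotent
      ((Commute.refl c).isNilpotent_mul_right (hnil c hc))).eq_zero
  have h := hsq (a + b) (add_mem ha hb)
  rw [mul_add, add_mul, add_mul, map_add, map_add, map_add, hsq a ha, hsq b hb,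
    LinearMap.trace_mul_comm k b a, zero_add, add_zero] at h
  exact add_self_eq_zero.mp h

theorem IsLieTripleSystem.trace_mul_eq_zero {R M : Type*} [CommRing R] [AddCommGroup M] [Module R M]
    {p : Submodule R (Module.End R M)} (hp : IsLieTripleSystem p)
    (htr : ∀ a ∈ p, ∀ b ∈ p, LinearMap.trace R M (a * b) = 0) {d e : Module.End R M}
    (hd : d ∈ bracketSpan p) (he : e ∈ bracketSpan p) : LinearMap.trace R M (d * e) = 0 := by
  have h : bracketSpan p ≤ LinearMap.ker (LinearMap.trace R M ∘ₗ LinearMap.mulLeft R d) := by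
    refine Submodule.map₂_le.mpr fun b hb c hc ↦ ?_
    have htriple : LinearMap.trace R M (d * ⁅b, c⁆) = LinearMap.trace R M (⁅d, b⁆ * c) := by
      rw [Ring.lie_def, Ring.lie_def, mul_sub, sub_mul, map_sub, map_sub, ← mul_assoc,
        LinearMap.trace_mul_cycle' R d c b, mul_assoc b d c]
    exact htriple.trans (htr _ (hp.lie_mem_right hd hb) c hc)
  exact h he

end TraceForm

section StandardEmbedding

attribute [local instance] LieRing.ofAssociativeRing

variable {R M : Type*} [CommRing R] [AddCommGroup M] [Module R M]

/-- The operator `d + a` on the first and `d - a` on the second summand of `M × M`, for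
`x = (d, a)`; thus `gradedEnd` is a homomorphism for the multiplication of pairs in which the
second component has odd degree. -/
def gradedEnd : Module.End R M × Module.End R M →ₗ[R] Module.End R (M × M) :=
  LinearMap.prodMapLinear R M M M M R ∘ₗ
    (LinearMap.fst R _ _ + LinearMap.snd R _ _).prod (LinearMap.fst R _ _ - LinearMap.snd R _ _)

theorem gradedEnd_apply (x : Module.End R M × Module.End R M) :
    gradedEnd x = (x.1 + x.2).prodMap (x.1 - x.2) :=
  rfl

theorem gradedEnd_mul (x y : Module.End R M × Module.End R M) :
    gradedEnd x * gradedEnd y =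
      gradedEnd (x.1 * y.1 + x.2 * y.2, x.1 * y.2 + x.2 * y.1) := by
  simp only [gradedEnd_apply, LinearMap.prodMap_mul]
  congr 1 <;> noncomm_ring

theorem lie_gradedEnd (x y : Module.End R M × Module.End R M) :
    ⁅gradedEnd x, gradedEnd y⁆ = gradedEnd (⁅x.1, y.1⁆ + ⁅x.2, y.2⁆, ⁅x.1, y.2⁆ + ⁅x.2, y.1⁆) := by
  rw [Ring.lie_def, gradedEnd_mul, gradedEnd_mul, ← map_sub]
  simp only [Prod.mk_sub_mk, Ring.lie_def]
  congr 2 <;> abel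

theorem trace_gradedEnd [Module.Free R M] [Module.Finite R M]
    (x : Module.End R M × Module.End R M) :
    LinearMap.trace R (M × M) (gradedEnd x) = 2 * LinearMap.trace R M x.1 := by
  rw [gradedEnd_apply, LinearMap.trace_prodMap', map_add, map_sub]
  ring

theorem isNilpotent_gradedEnd {a : Module.End R M} (ha : IsNilpotent a) :
    IsNilpotent (gradedEnd (0, a)) := by
  have h : gradedEnd (0, a) = LinearMap.prodMapRingHom R M M (a, -a) := by
    ext <;> simp [gradedEnd]
  rw [h]
  obtain ⟨n, hn⟩ := ha
  exact IsNilpotent.map ⟨n, Prod.ext hn (by rw [Prod.pow_snd, neg_pow, hn, mul_zero]; rfl)⟩ _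

namespace IsLieTripleSystem

variable {p : Submodule R (Module.End R M)}

/-- The standard embedding of a Lie triple system of endomorphisms of `M`, as the Lie algebra
`bracketSpan p ⊕ p` acting on `M × M` with `p` in odd degree. -/
def standardEmbedding (hp : IsLieTripleSystem p) : LieSubalgebra R (Module.End R (M × M)) where
  __ := ((bracketSpan p).prod p).map gradedEnd
  lie_mem' := by
    rintro _ _ ⟨x, ⟨hx₁, hx₂⟩, rfl⟩ ⟨y, ⟨hy₁, hy₂⟩, rfl⟩
    rw [lie_gradedEnd]
    exact ⟨_, ⟨add_mem (hp.lie_mem_bracketSpan_of_mem hx₁ hy₁) (lie_mem_bracketSpan hx₂ hy₂),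
      add_mem (hp.lie_mem_right hx₁ hy₂) (hp.lie_mem_left hx₂ hy₁)⟩, rfl⟩

theorem gradedEnd_mem_standardEmbedding (hp : IsLieTripleSystem p) {d a : Module.End R M}
    (hd : d ∈ bracketSpan p) (ha : a ∈ p) : gradedEnd (d, a) ∈ hp.standardEmbedding :=
  ⟨(d, a), ⟨hd, ha⟩, rfl⟩

theorem traceForm_standardEmbedding [Module.Free R M] [Module.Finite R M]
    (hp : IsLieTripleSystem p)
    (htr : ∀ a ∈ p, ∀ b ∈ p, LinearMap.trace R M (a * b) = 0) :
    LieModule.traceForm R hp.standardEmbedding (M × M) = 0 := by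
  ext ⟨_, x, ⟨hx₁, hx₂⟩, rfl⟩ ⟨_, y, ⟨hy₁, hy₂⟩, rfl⟩
  change LinearMap.trace R (M × M) (gradedEnd x * gradedEnd y) = 0
  rw [gradedEnd_mul, trace_gradedEnd, map_add, hp.trace_mul_eq_zero htr hx₁ hy₁,
    htr _ hx₂ _ hy₂, add_zero, mul_zero]

theorem gradedEnd_mem_derivedSeries (hp : IsLieTripleSystem p) {d : Module.End R M}
    (hd : d ∈ bracketSpan p) :
    (⟨gradedEnd (d, 0), hp.gradedEnd_mem_standardEmbedding hd (zero_mem p)⟩ :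
      hp.standardEmbedding) ∈ LieAlgebra.derivedSeries R hp.standardEmbedding 1 := by
  have h : bracketSpan p ≤
      ((LieAlgebra.derivedSeries R hp.standardEmbedding 1).toSubmodule.map
        hp.standardEmbedding.toSubmodule.subtype).comap (gradedEnd ∘ₗ LinearMap.inl R _ _) := by
    refine Submodule.map₂_le.mpr fun a ha b hb ↦ ?_
    refine ⟨⁅⟨_, hp.gradedEnd_mem_standardEmbedding (zero_mem _) ha⟩,
      ⟨_, hp.gradedEnd_mem_standardEmbedding (zero_mem _) hb⟩⁆,
      LieSubmodule.lie_mem_lie (LieSubmodule.mem_top _) (LieSubmodule.mem_top _), ?_⟩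
    exact (lie_gradedEnd (0, a) (0, b)).trans (by simp)
  obtain ⟨x, hx, hxd⟩ := h hd
  rwa [← show x = ⟨_, hp.gradedEnd_mem_standardEmbedding hd (zero_mem p)⟩ from Subtype.ext hxd]

theorem prod_zero_mem_lowerCentralSeries (hp : IsLieTripleSystem p) {n : ℕ} {w : Module.End R M}
    (hw : w ∈ p ^ n) (v : M) :
    (w v, (0 : M)) ∈ LieModule.lowerCentralSeries R hp.standardEmbedding (M × M) n := by
  induction n generalizing w v with
  | zero => exact LieSubmodule.mem_top _
  | succ n ih =>
    rw [pow_succ'] at hw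
    induction hw using Submodule.mul_induction_on' with
    | mem_mul_mem a ha w hw =>
      have h : ((a * w) v, (0 : M)) =
          ⁅(⟨_, hp.gradedEnd_mem_standardEmbedding (zero_mem _) ha⟩ : hp.standardEmbedding),
            (w v, (0 : M))⁆ := by
        change _ = gradedEnd (0, a) (w v, 0)
        simp [gradedEnd]
      rw [h, LieModule.lowerCentralSeries_succ]
      exact LieSubmodule.lie_mem_lie (LieSubmodule.mem_top _) (ih hw v)
    | add w _ w' _ h h' => simpa using add_mem h h'

theorem exists_pow_eq_bot {k V : Type*} [Field k] [CharZero k] [AddCommGroup V] [Module k V]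
    [FiniteDimensional k V] {p : Submodule k (Module.End k V)} (hp : IsLieTripleSystem p)
    (hnil : ∀ a ∈ p, IsNilpotent a) : ∃ n, p ^ n = ⊥ := by
  have hmod : LieModule.IsNilpotent hp.standardEmbedding (V × V) := by
    refine lieModule_isNilpotent_of_traceForm_eq_zero (hp.traceForm_standardEmbedding
      fun a ha b hb ↦ trace_mul_eq_zero_of_forall_isNilpotent hnil ha hb) ?_
    rintro ⟨_, ⟨d, a⟩, ⟨hd, ha⟩, rfl⟩
    refine ⟨⟨gradedEnd (0, a), hp.gradedEnd_mem_standardEmbedding (zero_mem _) ha⟩, ?_,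
      isNilpotent_gradedEnd (hnil a ha)⟩
    convert hp.gradedEnd_mem_derivedSeries hd
    simp [← map_sub]
  obtain ⟨n, hn⟩ := (LieModule.isNilpotent_iff k hp.standardEmbedding (V × V)).mp hmod
  refine ⟨n, (Submodule.eq_bot_iff _).mpr fun w hw ↦ LinearMap.ext fun v ↦ ?_⟩
  have h := hp.prod_zero_mem_lowerCentralSeries hw v
  rw [hn, LieSubmodule.mem_bot] at h
  exact congrArg Prod.fst h

end IsLieTripleSystem

end StandardEmbedding

section NilpotentIdeal

variable {k A : Type*} [Field k] [NonUnitalNonAssocCommRing A] [Module k A]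

theorem powSucc_mem_iser {I : Submodule k A} {x : A} (hx : x ∈ I) (n : ℕ) :
    powSucc x n ∈ iser k A I n := by
  induction n with
  | zero => rwa [iser]
  | succ n ih =>
    rw [iser]
    refine Submodule.mem_iSup_of_mem (0 : Fin (n + 1)) (Submodule.subset_span ⟨x, ?_, _, ih, rfl⟩)
    rwa [Fin.val_zero, iser]

theorem iser_le_self {I : Submodule k A} (hI : ∀ x : A, ∀ y ∈ I, x * y ∈ I) (n : ℕ) :
    iser k A I n ≤ I := by
  induction n using Nat.strong_induction_on with
  | _ n ih =>
    cases n with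
    | zero => rw [iser]
    | succ n =>
      rw [iser]
      refine iSup_le fun i ↦ Submodule.span_le.mpr ?_
      rintro _ ⟨x, -, y, hy, rfl⟩
      exact hI x y (ih _ (by omega) hy)

variable [SMulCommClass k A A] [IsScalarTower k A A]

/- One of the two factors of a product of total degree at least `2 ^ (i + 1)` has degree at least
`2 ^ i`; the other one acts through `I.map (LinearMap.mul k A)`. -/
theorem iser_le_map_mul_pow_smul_top {I : Submodule k A} (hI : ∀ x : A, ∀ y ∈ I, x * y ∈ I)
    {i m : ℕ} (hm : 2 ^ i ≤ m + 1) :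
    iser k A I m ≤ I.map (LinearMap.mul k A) ^ i • (⊤ : Submodule k A) := by
  have hmul {j : ℕ} {x y : A} (hx : x ∈ I)
      (hy : y ∈ I.map (LinearMap.mul k A) ^ j • (⊤ : Submodule k A)) :
      x * y ∈ I.map (LinearMap.mul k A) ^ (j + 1) • (⊤ : Submodule k A) := by
    rw [pow_succ', ← smul_eq_mul, Submodule.smul_assoc]
    exact Submodule.smul_mem_smul (Submodule.mem_map_of_mem (f := LinearMap.mul k A) hx) hy
  induction i generalizing m with
  | zero => rw [pow_zero, Submodule.one_smul]; exact le_top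
  | succ i ih =>
    have hpos := Nat.one_le_two_pow (n := i)
    rw [pow_succ] at hm
    obtain ⟨m, rfl⟩ := Nat.exists_eq_add_of_le' (show 1 ≤ m by omega)
    rw [iser]
    refine iSup_le fun j ↦ Submodule.span_le.mpr ?_
    rintro _ ⟨x, hx, y, hy, rfl⟩
    obtain h | h : 2 ^ i ≤ j.1 + 1 ∨ 2 ^ i ≤ m - j.1 + 1 := by omega
    · rw [mul_comm]
      exact hmul (iser_le_self hI _ hy) (ih h hx)
    · exact hmul (iser_le_self hI _ hx) (ih h hy)

theorem exists_iser_eq_bot {I : Submodule k A} (hI : ∀ x : A, ∀ y ∈ I, x * y ∈ I) {n : ℕ}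
    (hn : I.map (LinearMap.mul k A) ^ n = ⊥) : ∃ m, iser k A I m = ⊥ := by
  refine ⟨2 ^ n, eq_bot_iff.mpr ((iser_le_map_mul_pow_smul_top hI (Nat.le_succ _)).trans ?_)⟩
  rw [hn, Submodule.bot_smul]

end NilpotentIdeal

section TraceRadical

attribute [local instance] LieRing.ofAssociativeRing

variable {k A : Type*} [Field k] [NonUnitalNonAssocCommRing A] [Module k A]
  [SMulCommClass k A A] [IsScalarTower k A A]

/-- The trace form `(x, y) ↦ tr (L (x * y))` of the regular representation of `A`, where
`L = LinearMap.mul k A`. -/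
noncomputable def mulTraceForm (k A : Type*) [Field k] [NonUnitalNonAssocCommRing A] [Module k A]
    [SMulCommClass k A A] [IsScalarTower k A A] : LinearMap.BilinForm k A :=
  (LinearMap.mul k A).compr₂ (LinearMap.trace k A ∘ₗ LinearMap.mul k A)

theorem mulTraceForm_apply (x y : A) :
    mulTraceForm k A x y = LinearMap.trace k A (LinearMap.mul k A (x * y)) :=
  rfl

variable [CharZero k] [IsCommJordan A]

theorem mul_mem_ker_mulTraceForm (x : A) {y : A} (hy : y ∈ LinearMap.ker (mulTraceForm k A)) :
    x * y ∈ LinearMap.ker (mulTraceForm k A) := by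
  have := IsAddTorsionFree.of_isTorsionFree k A
  refine LinearMap.mem_ker.mpr (LinearMap.ext fun z ↦ ?_)
  rw [mulTraceForm_apply, trace_lmul_mul_mul_comm, mul_comm (x * z) y]
  exact LinearMap.congr_fun hy (x * z)

theorem isNilpotent_lmul_of_mem_ker_mulTraceForm [FiniteDimensional k A] {x : A}
    (hx : x ∈ LinearMap.ker (mulTraceForm k A)) : IsNilpotent (LinearMap.mul k A x) := by
  have := IsAddTorsionFree.of_isTorsionFree k A
  refine isJordanRep_mul.isNilpotent_map (m := 1) fun n hn ↦ ?_
  obtain ⟨n, rfl⟩ := Nat.exists_eq_add_of_le' hn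
  exact LinearMap.congr_fun hx (powSucc x n)

theorem isLieTripleSystem_map_mul {I : Submodule k A} (hI : ∀ x : A, ∀ y ∈ I, x * y ∈ I) :
    IsLieTripleSystem (I.map (LinearMap.mul k A)) := by
  have := IsAddTorsionFree.of_isTorsionFree k A
  rintro _ ⟨a, -, rfl⟩ _ ⟨b, hb, rfl⟩ _ ⟨c, hc, rfl⟩
  rw [lie_lie_mul]
  exact Submodule.mem_map_of_mem (sub_mem (hI _ c hc) (hI _ b hb))

theorem exists_iser_ker_mulTraceForm_eq_bot [FiniteDimensional k A] :
    ∃ n, iser k A (LinearMap.ker (mulTraceForm k A)) n = ⊥ := by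
  have hideal (x y : A) := mul_mem_ker_mulTraceForm (k := k) x (y := y)
  obtain ⟨n, hn⟩ := (isLieTripleSystem_map_mul hideal).exists_pow_eq_bot <| by
    rintro _ ⟨x, hx, rfl⟩
    exact isNilpotent_lmul_of_mem_ker_mulTraceForm hx
  exact exists_iser_eq_bot hideal hn

end TraceRadical

/-- a Jordan algebra `J` is semisimple (its only nilpotent ideal is `{0}`)
iff it admits a finite-dimensional representation whose trace form `(x, y) ↦ tr(π(xy))`
is nondegenerate.  (Every finite-dimensional vector space is isomorphic to some
`Fin n → K`, and the trace form is invariant under such an isomorphism.) -/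
theorem semisimple_iff_exists_rep_with_nondegenerate_trace_form
    {K : Type*} [Field K] [CharZero K]
    {J : Type*} [NonUnitalNonAssocCommRing J] [Module K J]
    [SMulCommClass K J J] [IsScalarTower K J J] [FiniteDimensional K J]
    (hjordan : ∀ x y : J, (x * y) * (x * x) = x * (y * (x * x))) :
    -- `J` is semisimple: every nilpotent ideal of `J` is zero
    (∀ I : Submodule K J, (∀ x : J, ∀ i ∈ I, x * i ∈ I) →
        (∃ n : ℕ, iser K J I n = ⊥) → I = ⊥) ↔
      -- iff there is a finite-dimensional representation with nondegenerate trace form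
      (∃ (n : ℕ) (π : J →ₗ[K] Module.End K (Fin n → K)),
        (∀ x : J, π (x * x) * π x = π x * π (x * x)) ∧
        (∀ x y : J,
          2 • (π (x * y) * π x) + π (x * x) * π y - 2 • (π x * (π y * π x)) -
              π ((x * x) * y) = 0) ∧
        (∀ x : J,
          (∀ y : J, LinearMap.trace K (Fin n → K) (π (x * y)) = 0) → x = 0)) := by
  have : IsCommJordan J := ⟨hjordan⟩
  constructor
  · intro hss
    have := IsAddTorsionFree.of_isTorsionFree K J
    have hker : LinearMap.ker (mulTraceForm K J) = ⊥ :=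
      hss _ (fun x _ ↦ mul_mem_ker_mulTraceForm x) exists_iser_ker_mulTraceForm_eq_bot
    let e : J ≃ₗ[K] (Fin (Module.finrank K J) → K) := (Module.finBasis K J).equivFun
    have hπ := (isJordanRep_mul (R := K) (A := J)).comp (e.conjAlgEquiv K).toAlgHom
    refine ⟨_, _, hπ.commute_sq, hπ.quadratic, fun x hx ↦ ?_⟩
    refine LinearMap.ker_eq_bot'.mp hker x (LinearMap.ext fun y ↦ ?_)
    exact (LinearMap.trace_conj' _ e).symm.trans (hx y)
  · rintro ⟨n, π, hcomm, hquad, hnondeg⟩ I hI ⟨m, hm⟩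
    refine (Submodule.eq_bot_iff I).mpr fun x hx ↦ hnondeg x fun y ↦ ?_
    have hzero : powSucc (x * y) m = 0 :=
      (Submodule.mem_bot K).mp (hm ▸ powSucc_mem_iser (mul_comm y x ▸ hI y x hx) m)
    have hnil : IsNilpotent (π (x * y)) :=
      IsJordanRep.isNilpotent_map ⟨hcomm, hquad⟩ (m := m) fun i hi ↦ by
        rw [powSucc_eq_zero_of_le hzero hi, map_zero, map_zero]
    exact (LinearMap.isNilpotent_trace_of_isNilpotent hnil).eq_zero
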